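/- A lattice effect algebra E = (E;⊕,',0,1) is a lattice orthoalgebra if and only if its corresponding effect groupoid ℝ(E) = (E;·,',0,1), where x·y := ((x'∧y)⊕y')', is idempotent, i.e., satisfies the identity x·x = x. -/

import Mathlib

/-- An effect algebra: a partial algebra (E;⊕,',0,1). The partial operation ⊕ is
modeled by a definedness predicate `D` together with a total function `add` whose
value is only meaningful on defined pairs. -/
structure EffectAlgebra (E : Type*) where
  /-- definedness of `x ⊕ y` -/
  D : E → E → Prop
  /-- the value of `x ⊕ y` (meaningful only when `D x y`) -/
  add : E → E → E
  zero : E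
  one : E
  /-- the complement `x'` -/
  compl : E → E
  /-- (E1) commutativity -/
  E1 : ∀ x y, D x y → D y x ∧ add x y = add y x
  /-- (E2) associativity -/
  E2 : ∀ x y z, D x y → D (add x y) z →
    D y z ∧ D x (add y z) ∧ add (add x y) z = add x (add y z)
  /-- (E3) existence of the complement -/
  E3a : ∀ x, D x (compl x)
  E3b : ∀ x, add x (compl x) = one
  /-- (E3) uniqueness of the complement -/
  E3c : ∀ x y, D x y → add x y = one → y = compl x
  /-- (E4) -/
  E4 : ∀ x, D x one → x = zero

/-- The induced order of an effect algebra: `a ≤ b` iff `a ⊕ c = b` for some `c`. -/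
def EffectAlgebra.le {E : Type*} (A : EffectAlgebra E) (a b : E) : Prop :=
  ∃ c, A.D a c ∧ A.add a c = b

/-- A lattice effect algebra: an effect algebra whose induced order is a lattice,
with meet `inf` and join `sup`. -/
structure LatticeEffectAlgebra (E : Type*) extends EffectAlgebra E where
  inf : E → E → E
  sup : E → E → E
  inf_le_left : ∀ a b, toEffectAlgebra.le (inf a b) a
  inf_le_right : ∀ a b, toEffectAlgebra.le (inf a b) b
  le_inf : ∀ a b c, toEffectAlgebra.le c a → toEffectAlgebra.le c b →
    toEffectAlgebra.le c (inf a b)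
  le_sup_left : ∀ a b, toEffectAlgebra.le a (sup a b)
  le_sup_right : ∀ a b, toEffectAlgebra.le b (sup a b)
  sup_le : ∀ a b c, toEffectAlgebra.le a c → toEffectAlgebra.le b c →
    toEffectAlgebra.le (sup a b) c

/-- The total operation `x·y := ((x'∧y)⊕y')'` on a lattice effect algebra
(well defined since `x'∧y ≤ y`). -/
def LatticeEffectAlgebra.prod {E : Type*} (A : LatticeEffectAlgebra E) (x y : E) : E :=
  A.compl (A.add (A.inf (A.compl x) y) (A.compl y))

/-!
If `(x' ∧ y) ⊕ y' = y'`, then adding `y` shows that `(x' ∧ y) ⊕ 1` is defined, which forces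
`x' ∧ y = 0`; so `x · y = y` exactly when `x' ∧ y = 0`, and idempotence says that `x' ∧ x = 0` for
all `x`. Since `x' ∧ x` lies below both `x` and `x'`, its sum with itself is defined; conversely,
if `x ⊕ x` is defined then `x ≤ x'`, so `x ≤ x' ∧ x`.
-/

namespace EffectAlgebra

variable {E : Type*} {A : EffectAlgebra E} {a b c d : E}

theorem D.symm (h : A.D a b) : A.D b a :=
  (A.E1 a b h).1

theorem add_comm (h : A.D a b) : A.add a b = A.add b a :=
  (A.E1 a b h).2

variable (A)

theorem compl_add_self (a : E) : A.add (A.compl a) a = A.one :=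
  (add_comm (A.E3a a)).symm.trans (A.E3b a)

theorem compl_involutive : Function.Involutive A.compl := fun a =>
  (A.E3c _ _ (A.E3a a).symm (A.compl_add_self a)).symm

theorem compl_one : A.compl A.one = A.zero :=
  A.E4 _ (A.E3a A.one).symm

theorem D_one_zero : A.D A.one A.zero :=
  A.compl_one ▸ A.E3a A.one

theorem one_add_zero : A.add A.one A.zero = A.one :=
  A.compl_one ▸ A.E3b A.one

theorem D_zero_and_add_zero (a : E) : A.D a A.zero ∧ A.add a A.zero = a := by
  obtain ⟨hD, hD', assoc⟩ :=
    A.E2 _ _ A.zero (A.E3a a).symm ((A.compl_add_self a).symm ▸ A.D_one_zero)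
  have compl_add_add_zero : A.add (A.compl a) (A.add a A.zero) = A.one := by
    rw [← assoc, A.compl_add_self, A.one_add_zero]
  exact ⟨hD, (A.E3c _ _ hD' compl_add_add_zero).trans (A.compl_involutive a)⟩

theorem D_zero (a : E) : A.D a A.zero :=
  (A.D_zero_and_add_zero a).1

theorem add_zero (a : E) : A.add a A.zero = a :=
  (A.D_zero_and_add_zero a).2

theorem le_refl (a : E) : A.le a a :=
  ⟨A.zero, A.D_zero a, A.add_zero a⟩

variable {A}

theorem add_eq_right (h : A.D a b) : A.add a b = b ↔ a = A.zero := by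
  constructor
  · intro hab
    obtain ⟨-, hD, -⟩ := A.E2 a b (A.compl b) h (hab.symm ▸ A.E3a b)
    exact A.E4 a (A.E3b b ▸ hD)
  · rintro rfl
    rw [add_comm h, A.add_zero]

theorem D.mono_left (hab : A.le a b) (h : A.D b c) : A.D a c := by
  obtain ⟨e, hae, rfl⟩ := hab
  exact (A.E2 e a c hae.symm (add_comm hae ▸ h)).1

theorem D.mono (hab : A.le a b) (hcd : A.le c d) (h : A.D b d) : A.D a c :=
  (D.mono_left hcd (D.mono_left hab h).symm).symm

theorem D.le_compl (h : A.D a b) : A.le a (A.compl b) := by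
  obtain ⟨hD, hD', assoc⟩ := A.E2 b a _ h.symm (A.E3a (A.add b a))
  exact ⟨_, hD, A.E3c _ _ hD' (assoc.symm.trans (A.E3b _))⟩

theorem eq_zero_of_le_zero (h : A.le a A.zero) : a = A.zero :=
  A.E4 a (D.mono_left h A.D_one_zero.symm)

end EffectAlgebra

namespace LatticeEffectAlgebra

open EffectAlgebra

variable {E : Type*} (A : LatticeEffectAlgebra E) (x y : E)

theorem prod_eq_right_iff : A.prod x y = y ↔ A.inf (A.compl x) y = A.zero := by
  have hD : A.D (A.inf (A.compl x) y) (A.compl y) :=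
    D.mono_left (A.inf_le_right _ _) (A.E3a y)
  rw [prod, A.compl_involutive.eq_iff, add_eq_right hD]

theorem D_inf_compl_self : A.D (A.inf (A.compl x) x) (A.inf (A.compl x) x) :=
  D.mono (A.inf_le_right _ _) (A.inf_le_left _ _) (A.E3a x)

variable {x} in
theorem le_inf_compl_self (h : A.D x x) : A.le x (A.inf (A.compl x) x) :=
  A.le_inf _ _ _ h.le_compl (A.le_refl x)

theorem orthoalgebra_iff_inf_compl_self_eq_zero :
    (∀ x, A.D x x → x = A.zero) ↔ ∀ x, A.inf (A.compl x) x = A.zero :=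
  ⟨fun h x => h _ (A.D_inf_compl_self x),
    fun h x hx => eq_zero_of_le_zero (h x ▸ A.le_inf_compl_self hx)⟩

end LatticeEffectAlgebra

/-- A lattice effect algebra is a lattice orthoalgebra (i.e. `x⊕x` exists only for
`x = 0`) iff its effect groupoid `(E;·,',0,1)` with `x·y := ((x'∧y)⊕y')'` is
idempotent. -/
theorem orthoalgebra_iff_idempotent {E : Type*} (A : LatticeEffectAlgebra E) :
    (∀ x, A.D x x → x = A.zero) ↔ (∀ x, A.prod x x = x) := by
  rw [A.orthoalgebra_iff_inf_compl_self_eq_zero]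
  exact forall_congr' fun x => (A.prod_eq_right_iff x x).symm
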